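/- (Convergence of the iterative algorithm.) Let b ∈ ℝ^{N+1}. For u ∈ ℝ^{N+1} and interior i define the discrete second difference q_i(u) = [ (u_{i+1}−u_i)/(x_{i+1}−x_i) − (u_i−u_{i−1})/(x_i−x_{i−1}) ] / (x_{i+1}−x_{i−1}) and the policy σ(u)_i = σ̄ if q_i(u) ≥ 0 and σ(u)_i = σ̲ otherwise. Given any initial iterate ũ⁰ ∈ ℝ^{N+1}, define recursively ũ^{k+1} as the unique solution of (I − ΔtA(σ(ũ^k))) ũ^{k+1} = b (with identity boundary rows). Then the sequence (ũ^k) converges as k → ∞ to the unique vector u* ∈ ℝ^{N+1} satisfying u*_0 = b_0, u*_N = b_N, and u*_i − Δt · max_{σ∈{σ̲,σ̄}} [ α_i(σ)u*_{i−1} + β_i(σ)u*_{i+1} − (α_i(σ)+β_i(σ)+r)u*_i ] = b_i for every interior i. -/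

import Mathlib

/-!
Since `(A(s)u)_i = s² x_i² q_i(u) - r u_i`, the policy `σ(u)` maximises `(A(s)u)_i` over
`s ∈ {σ̲, σ̄}` (`Fnode_pol_eq_max`), so the scheme is Howard's policy iteration. The matrices
`I - Δt A(s)` satisfy a discrete comparison principle (`nonneg_of_supersolution`), proved by looking
at an index where the vector is minimal. Comparison shows that the iterates increase from `k = 1` on
and are bounded by `∑ |b_j|`, hence converge. The difference between the linearised term
`(A(σ(ũ^k))ũ^{k+1})_i` and the maximum at `ũ^k` is `(A(σ(ũ^k))(ũ^{k+1} - ũ^k))_i`, which tends to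
zero, so the limit solves the nonlinear system. Two solutions agree because each one dominates the
other, again by comparison with the policy of the dominated one.
-/

/-- `α_i(σ) = σ²x_i²/((x_i − x_{i−1})(x_{i+1} − x_{i−1}))`. -/
noncomputable def alphaC (x : ℕ → ℝ) (s : ℝ) (i : ℕ) : ℝ :=
  s ^ 2 * (x i) ^ 2 / ((x i - x (i - 1)) * (x (i + 1) - x (i - 1)))

/-- `β_i(σ) = σ²x_i²/((x_{i+1} − x_i)(x_{i+1} − x_{i−1}))`. -/
noncomputable def betaC (x : ℕ → ℝ) (s : ℝ) (i : ℕ) : ℝ :=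
  s ^ 2 * (x i) ^ 2 / ((x (i + 1) - x i) * (x (i + 1) - x (i - 1)))

/-- The `i`-th component of `A(τ)u`:
`(A(τ)u)_i = α_i(τ)u_{i−1} + β_i(τ)u_{i+1} − (α_i(τ)+β_i(τ)+r)u_i`. -/
noncomputable def Fnode (x : ℕ → ℝ) (s r : ℝ) (i : ℕ) (u : ℕ → ℝ) : ℝ :=
  alphaC x s i * u (i - 1) + betaC x s i * u (i + 1)
    - (alphaC x s i + betaC x s i + r) * u i

/-- The discrete second difference
`q_i(u) = [(u_{i+1}−u_i)/(x_{i+1}−x_i) − (u_i−u_{i−1})/(x_i−x_{i−1})]/(x_{i+1}−x_{i−1})`. -/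
noncomputable def qdiff (x : ℕ → ℝ) (u : ℕ → ℝ) (i : ℕ) : ℝ :=
  ((u (i + 1) - u i) / (x (i + 1) - x i) - (u i - u (i - 1)) / (x i - x (i - 1)))
    / (x (i + 1) - x (i - 1))

/-- The policy `σ(u)_i = σ̄` if `q_i(u) ≥ 0` and `σ(u)_i = σ̲` otherwise. -/
noncomputable def pol (x : ℕ → ℝ) (σlo σhi : ℝ) (u : ℕ → ℝ) (i : ℕ) : ℝ :=
  if 0 ≤ qdiff x u i then σhi else σlo

lemma alphaC_nonneg {N : ℕ} {x : ℕ → ℝ} (hx : ∀ i < N, x i < x (i + 1)) (s : ℝ) {i : ℕ}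
    (h1 : 1 ≤ i) (h2 : i ≤ N - 1) : 0 ≤ alphaC x s i := by
  obtain ⟨j, rfl⟩ : ∃ j, i = j + 1 := ⟨i - 1, by omega⟩
  have a := hx j (by omega)
  have c := hx (j + 1) (by omega)
  simp only [alphaC, Nat.add_sub_cancel]
  have a' : 0 ≤ x (j + 1) - x j := by linarith
  have c' : 0 ≤ x (j + 1 + 1) - x j := by linarith
  positivity

lemma betaC_nonneg {N : ℕ} {x : ℕ → ℝ} (hx : ∀ i < N, x i < x (i + 1)) (s : ℝ) {i : ℕ}
    (h1 : 1 ≤ i) (h2 : i ≤ N - 1) : 0 ≤ betaC x s i := by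
  obtain ⟨j, rfl⟩ : ∃ j, i = j + 1 := ⟨i - 1, by omega⟩
  have a := hx j (by omega)
  have c := hx (j + 1) (by omega)
  simp only [betaC, Nat.add_sub_cancel]
  have a' : 0 ≤ x (j + 1 + 1) - x (j + 1) := by linarith
  have c' : 0 ≤ x (j + 1 + 1) - x j := by linarith
  positivity

lemma Fnode_eq_qdiff {N : ℕ} {x : ℕ → ℝ} (hx : ∀ i < N, x i < x (i + 1)) (s r : ℝ) {i : ℕ}
    (h1 : 1 ≤ i) (h2 : i ≤ N - 1) (u : ℕ → ℝ) :
    Fnode x s r i u = s ^ 2 * (x i) ^ 2 * qdiff x u i - r * u i := by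
  obtain ⟨j, rfl⟩ : ∃ j, i = j + 1 := ⟨i - 1, by omega⟩
  have a := hx j (by omega)
  have c := hx (j + 1) (by omega)
  simp only [Fnode, alphaC, betaC, qdiff, Nat.add_sub_cancel]
  have a' : x (j + 1) - x j ≠ 0 := by intro h; linarith
  have c' : x (j + 1 + 1) - x j ≠ 0 := by intro h; linarith
  have d' : x (j + 1 + 1) - x (j + 1) ≠ 0 := by intro h; linarith
  field_simp
  ring

lemma Fnode_sub (x : ℕ → ℝ) (s r : ℝ) (i : ℕ) (u v : ℕ → ℝ) :
    Fnode x s r i (fun j => u j - v j) = Fnode x s r i u - Fnode x s r i v := by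
  simp only [Fnode]
  ring

lemma pol_eq_or (x : ℕ → ℝ) (σlo σhi : ℝ) (u : ℕ → ℝ) (i : ℕ) :
    pol x σlo σhi u i = σlo ∨ pol x σlo σhi u i = σhi := by
  unfold pol
  split_ifs <;> simp

/-- The sign of the second difference selects the maximising volatility. -/
lemma Fnode_pol_eq_max {N : ℕ} {x : ℕ → ℝ} (hx : ∀ i < N, x i < x (i + 1))
    {σlo σhi : ℝ} (r : ℝ) (hσlo : 0 ≤ σlo) (hσ : σlo < σhi) {i : ℕ}
    (h1 : 1 ≤ i) (h2 : i ≤ N - 1) (u : ℕ → ℝ) :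
    Fnode x (pol x σlo σhi u i) r i u = max (Fnode x σlo r i u) (Fnode x σhi r i u) := by
  have hsq : σlo ^ 2 * (x i) ^ 2 ≤ σhi ^ 2 * (x i) ^ 2 := by gcongr
  unfold pol
  split_ifs with h
  · rw [max_eq_right]
    rw [Fnode_eq_qdiff hx _ _ h1 h2, Fnode_eq_qdiff hx _ _ h1 h2]
    linarith [mul_le_mul_of_nonneg_right hsq h]
  · rw [max_eq_left]
    rw [Fnode_eq_qdiff hx _ _ h1 h2, Fnode_eq_qdiff hx _ _ h1 h2]
    linarith [mul_le_mul_of_nonpos_right hsq (not_le.mp h).le]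

lemma Fnode_pol_le_max (x : ℕ → ℝ) (σlo σhi r : ℝ) (i : ℕ) (v u : ℕ → ℝ) :
    Fnode x (pol x σlo σhi v i) r i u ≤ max (Fnode x σlo r i u) (Fnode x σhi r i u) := by
  rcases pol_eq_or x σlo σhi v i with h | h <;> rw [h]
  · exact le_max_left _ _
  · exact le_max_right _ _

/-- Discrete comparison principle for `I - Δt A(s)`: at a negative interior minimum of `w` one would
have `(A(s)w)_i ≥ 0`, contradicting the supersolution inequality. -/
lemma nonneg_of_supersolution {N : ℕ} {x : ℕ → ℝ} (hx : ∀ i < N, x i < x (i + 1))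
    {r Δt : ℝ} (hr : 0 ≤ r) (hΔt : 0 < Δt) (s w : ℕ → ℝ) (h0 : 0 ≤ w 0) (hN : 0 ≤ w N)
    (h : ∀ i, 1 ≤ i → i ≤ N - 1 → 0 ≤ w i - Δt * Fnode x (s i) r i w) :
    ∀ i ≤ N, 0 ≤ w i := by
  obtain ⟨m, hm, hmin⟩ := Finset.exists_min_image (Finset.range (N + 1)) w ⟨0, by simp⟩
  simp only [Finset.mem_range] at hm hmin
  suffices hw : 0 ≤ w m from fun i hi => hw.trans (hmin i (by omega))
  by_contra! hneg
  have hm0 : m ≠ 0 := fun e => by subst e; linarith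
  have hmN : m ≠ N := fun e => by subst e; linarith
  have h1 : 1 ≤ m := by omega
  have h2 : m ≤ N - 1 := by omega
  have ha := mul_nonneg (alphaC_nonneg hx (s m) h1 h2) (sub_nonneg.2 (hmin (m - 1) (by omega)))
  have hb := mul_nonneg (betaC_nonneg hx (s m) h1 h2) (sub_nonneg.2 (hmin (m + 1) (by omega)))
  have hc := mul_nonneg hr (neg_nonneg.2 hneg.le)
  have hF : 0 ≤ Fnode x (s m) r m w := by
    simp only [Fnode]
    linarith
  have := mul_nonneg hΔt.le hF
  linarith [h m h1 h2]

lemma le_of_comparison {N : ℕ} {x : ℕ → ℝ} (hx : ∀ i < N, x i < x (i + 1))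
    {r Δt : ℝ} (hr : 0 ≤ r) (hΔt : 0 < Δt) (s u v : ℕ → ℝ) (h0 : u 0 ≤ v 0) (hN : u N ≤ v N)
    (h : ∀ i, 1 ≤ i → i ≤ N - 1 →
      u i - Δt * Fnode x (s i) r i u ≤ v i - Δt * Fnode x (s i) r i v) :
    ∀ i ≤ N, u i ≤ v i := by
  intro i hi
  have := nonneg_of_supersolution hx hr hΔt s (fun j => v j - u j) (by simpa using h0)
    (by simpa using hN) (fun i h1 h2 => by
      rw [Fnode_sub]
      linarith [h i h1 h2]) i hi
  simpa using this

lemma tendsto_Fnode (x : ℕ → ℝ) (s r : ℝ) (i : ℕ) {U : ℕ → ℕ → ℝ} {u : ℕ → ℝ}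
    (hm : Filter.Tendsto (fun k => U k (i - 1)) Filter.atTop (nhds (u (i - 1))))
    (hc : Filter.Tendsto (fun k => U k i) Filter.atTop (nhds (u i)))
    (hp : Filter.Tendsto (fun k => U k (i + 1)) Filter.atTop (nhds (u (i + 1)))) :
    Filter.Tendsto (fun k => Fnode x s r i (U k)) Filter.atTop (nhds (Fnode x s r i u)) := by
  unfold Fnode
  exact ((hm.const_mul _).add (hp.const_mul _)).sub (hc.const_mul _)

/-- A solution of the nonlinear system lies below any other one: the policy of `u` is optimal for `u`
and possibly suboptimal for `v`. -/
lemma solution_le_solution {N : ℕ} {x : ℕ → ℝ} (hx : ∀ i < N, x i < x (i + 1))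
    {σlo σhi r Δt : ℝ} (hσlo : 0 ≤ σlo) (hσ : σlo < σhi) (hr : 0 ≤ r) (hΔt : 0 < Δt)
    {b u v : ℕ → ℝ}
    (hu : u 0 = b 0 ∧ u N = b N ∧ ∀ i, 1 ≤ i → i ≤ N - 1 →
      u i - Δt * max (Fnode x σlo r i u) (Fnode x σhi r i u) = b i)
    (hv : v 0 = b 0 ∧ v N = b N ∧ ∀ i, 1 ≤ i → i ≤ N - 1 →
      v i - Δt * max (Fnode x σlo r i v) (Fnode x σhi r i v) = b i) :
    ∀ i ≤ N, u i ≤ v i := by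
  refine le_of_comparison hx hr hΔt (pol x σlo σhi u) u v (by rw [hu.1, hv.1])
    (by rw [hu.2.1, hv.2.1]) fun i h1 h2 => ?_
  rw [Fnode_pol_eq_max hx r hσlo hσ h1 h2, hu.2.2 i h1 h2, ← hv.2.2 i h1 h2]
  have := mul_le_mul_of_nonneg_left (Fnode_pol_le_max x σlo σhi r i u v) hΔt.le
  linarith

/-- Convergence of the iterative algorithm: the policy iteration
`(I − ΔtA(σ(ũ^k)))ũ^{k+1} = b` converges, from any initial iterate, to the unique
solution of the nonlinear discrete system
`u*_i − Δt·max_{σ∈{σ̲,σ̄}} (A(σ)u*)_i = b_i` with identity boundary rows. -/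
theorem convergence_iterative_algorithm
    (N : ℕ) (hN : 2 ≤ N) (x : ℕ → ℝ) (hx0 : x 0 = 0)
    (hxmono : ∀ i < N, x i < x (i + 1))
    (σlo σhi r Δt : ℝ) (hσlo : 0 ≤ σlo) (hσ : σlo < σhi) (hr : 0 ≤ r) (hΔt : 0 < Δt)
    (b : ℕ → ℝ) (ut : ℕ → ℕ → ℝ)
    (hrec0 : ∀ k, ut (k + 1) 0 = b 0) (hrecN : ∀ k, ut (k + 1) N = b N)
    (hrec : ∀ k, ∀ i, 1 ≤ i → i ≤ N - 1 →
      ut (k + 1) i - Δt * Fnode x (pol x σlo σhi (ut k) i) r i (ut (k + 1)) = b i) :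
    ∃ ustar : ℕ → ℝ,
      (ustar 0 = b 0 ∧ ustar N = b N ∧
        ∀ i, 1 ≤ i → i ≤ N - 1 →
          ustar i - Δt * max (Fnode x σlo r i ustar) (Fnode x σhi r i ustar) = b i) ∧
      (∀ v : ℕ → ℝ,
        (v 0 = b 0 ∧ v N = b N ∧
          ∀ i, 1 ≤ i → i ≤ N - 1 →
            v i - Δt * max (Fnode x σlo r i v) (Fnode x σhi r i v) = b i) →
        ∀ i ≤ N, v i = ustar i) ∧
      ∀ i ≤ N, Filter.Tendsto (fun k => ut k i) Filter.atTop (nhds (ustar i)) := by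
  have hmono : ∀ i ≤ N, Monotone fun k => ut (k + 1) i := by
    intro i hi
    refine monotone_nat_of_le_succ fun k => ?_
    refine le_of_comparison hxmono hr hΔt (pol x σlo σhi (ut (k + 1))) (ut (k + 1)) (ut (k + 1 + 1))
      (by rw [hrec0, hrec0]) (by rw [hrecN, hrecN]) (fun i h1 h2 => ?_) i hi
    rw [hrec (k + 1) i h1 h2, ← hrec k i h1 h2, Fnode_pol_eq_max hxmono r hσlo hσ h1 h2]
    have := mul_le_mul_of_nonneg_left
      (Fnode_pol_le_max x σlo σhi r i (ut k) (ut (k + 1))) hΔt.le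
    linarith
  set M : ℝ := ∑ j ∈ Finset.range (N + 1), |b j| with hM
  have hbM : ∀ i ≤ N, b i ≤ M := fun i hi => (le_abs_self _).trans
    (Finset.single_le_sum (f := fun j => |b j|) (fun j _ => abs_nonneg _)
      (Finset.mem_range.2 (by omega)))
  have hM0 : 0 ≤ M := Finset.sum_nonneg fun j _ => abs_nonneg _
  have hbdd : ∀ k, ∀ i ≤ N, ut (k + 1) i ≤ M := by
    intro k
    refine le_of_comparison hxmono hr hΔt (pol x σlo σhi (ut k)) (ut (k + 1)) (fun _ => M)
      (by rw [hrec0]; exact hbM 0 (by omega)) (by rw [hrecN]; exact hbM N le_rfl)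
      fun i h1 h2 => ?_
    rw [hrec k i h1 h2]
    -- On a constant vector only the discount term of `A(s)` survives.
    have hconst : Fnode x (pol x σlo σhi (ut k) i) r i (fun _ => M) = -(r * M) := by
      simp only [Fnode]
      ring
    rw [hconst]
    have := mul_nonneg hΔt.le (mul_nonneg hr hM0)
    linarith [hbM i (by omega)]
  have hlim1 : ∀ i ≤ N, Filter.Tendsto (fun k => ut (k + 1) i) Filter.atTop
      (nhds (⨆ k, ut (k + 1) i)) := fun i hi =>
    tendsto_atTop_ciSup (hmono i hi) ⟨M, by rintro _ ⟨k, rfl⟩; exact hbdd k i hi⟩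
  set u : ℕ → ℝ := fun i => ⨆ k, ut (k + 1) i with hu
  have hlim : ∀ i ≤ N, Filter.Tendsto (fun k => ut k i) Filter.atTop (nhds (u i)) :=
    fun i hi => (Filter.tendsto_add_atTop_iff_nat (f := fun k => ut k i) 1).1 (hlim1 i hi)
  have hsol : u 0 = b 0 ∧ u N = b N ∧ ∀ i, 1 ≤ i → i ≤ N - 1 →
      u i - Δt * max (Fnode x σlo r i u) (Fnode x σhi r i u) = b i := by
    refine ⟨by simp [hu, hrec0], by simp [hu, hrecN], fun i h1 h2 => ?_⟩
    have hF : ∀ s, Filter.Tendsto (fun k => Fnode x s r i (ut k)) Filter.atTop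
        (nhds (Fnode x s r i u)) := fun s =>
      tendsto_Fnode x s r i (hlim _ (by omega)) (hlim _ (by omega)) (hlim _ (by omega))
    have hD : ∀ s, Filter.Tendsto (fun k => |Fnode x s r i (ut (k + 1)) - Fnode x s r i (ut k)|)
        Filter.atTop (nhds 0) := fun s => by
      have := (((hF s).comp (Filter.tendsto_add_atTop_nat 1)).sub (hF s)).abs
      simpa using this
    have hE : Filter.Tendsto (fun k => Fnode x (pol x σlo σhi (ut k) i) r i (ut (k + 1))
        - Fnode x (pol x σlo σhi (ut k) i) r i (ut k)) Filter.atTop (nhds 0) := by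
      refine squeeze_zero_norm (fun k => ?_) (by simpa using (hD σlo).add (hD σhi))
      rw [Real.norm_eq_abs]
      -- The policy takes only two values, so the sum of both increments is a uniform bound.
      rcases pol_eq_or x σlo σhi (ut k) i with h | h <;> rw [h]
      · exact le_add_of_nonneg_right (abs_nonneg _)
      · exact le_add_of_nonneg_left (abs_nonneg _)
    have hG := (hlim1 i (by omega)).sub ((hE.add ((hF σlo).max (hF σhi))).const_mul Δt)
    rw [zero_add] at hG
    refine tendsto_nhds_unique hG (tendsto_const_nhds.congr fun k => ?_)
    rw [← Fnode_pol_eq_max hxmono r hσlo hσ h1 h2, sub_add_cancel, hrec k i h1 h2]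
  exact ⟨u, hsol, fun v hv i hi => le_antisymm
    (solution_le_solution hxmono hσlo hσ hr hΔt hv hsol i hi)
    (solution_le_solution hxmono hσlo hσ hr hΔt hsol hv i hi), hlim⟩
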